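/- Let G=(V,E) be an exchange network with weights w_e ∈ [0,1] for all e∈E, let κ∈(0,1), and take any initial condition α^0 ∈ [0,1]^{2|E|}. For any ε>0, set T*(ε) = 1/(π κ(1−κ) ε²). Then for all t ≥ T*(ε), the iterate α^t of the natural dynamics is an ε-fixed point. -/

import Mathlib

namespace EN

open Finset

variable {V : Type*}

/-- The nonnegative part `(x)₊ = max (x, 0)`. -/
noncomputable def pos (x : ℝ) : ℝ := max x 0

variable [Fintype V] [DecidableEq V]

/-- The maximum of `f` over a finite set of vertices (`0` over the empty set). -/
noncomputable def fmax (s : Finset V) (f : V → ℝ) : ℝ := ⨆ k ∈ s, f k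

/-- The offer from `i` to `j` given messages `α` and weights `w`:
`m_{i→j} = (w_{ij} − α_{i\j})₊ − (1/2) (w_{ij} − α_{i\j} − α_{j\i})₊`. -/
noncomputable def offer (w α : V → V → ℝ) (i j : V) : ℝ :=
  pos (w i j - α i j) - (1 / 2) * pos (w i j - α i j - α j i)

/-- The update operator `T` of the natural dynamics:
`(Tα)_{i\j} = max_{k ∈ ∂i \ j} m_{k→i}`. -/
noncomputable def upd (G : SimpleGraph V) [DecidableRel G.Adj] (w α : V → V → ℝ)
    (i j : V) : ℝ :=
  fmax ((G.neighborFinset i).erase j) fun k => offer w α k i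

/-- The earnings estimate `γ_i = max_{k ∈ ∂i} m_{k→i}`. -/
noncomputable def earn (G : SimpleGraph V) [DecidableRel G.Adj] (w α : V → V → ℝ)
    (i : V) : ℝ :=
  fmax (G.neighborFinset i) fun k => offer w α k i

/-- Exchange network weights: symmetric and positive on every edge. -/
def GoodW (G : SimpleGraph V) (w : V → V → ℝ) : Prop :=
  (∀ i j, w i j = w j i) ∧ ∀ i j, G.Adj i j → 0 < w i j

/-- A valid message vector: nonnegative on all directed edges. -/
def ValidMsg (G : SimpleGraph V) (α : V → V → ℝ) : Prop :=
  ∀ i j, G.Adj i j → 0 ≤ α i j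

/-- Fixed point of the natural-dynamics update operator. -/
def IsFixedPt (G : SimpleGraph V) [DecidableRel G.Adj] (w α : V → V → ℝ) : Prop :=
  ∀ i j, G.Adj i j → upd G w α i j = α i j

/-- `ε`-fixed point. -/
def IsEpsFixedPt (G : SimpleGraph V) [DecidableRel G.Adj] (w α : V → V → ℝ) (ε : ℝ) : Prop :=
  ∀ i j, G.Adj i j → |α i j - upd G w α i j| ≤ ε

/-- The natural dynamics with damping factor `κ`: `α^{t+1} = (1−κ) α^t + κ T α^t`. -/
noncomputable def dyn (G : SimpleGraph V) [DecidableRel G.Adj] (w : V → V → ℝ) (κ : ℝ)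
    (α0 : V → V → ℝ) : ℕ → V → V → ℝ
  | 0 => α0
  | t + 1 => fun i j =>
      (1 - κ) * dyn G w κ α0 t i j + κ * upd G w (dyn G w κ α0 t) i j

/-- Sup norm over directed edges. -/
noncomputable def msgSup (G : SimpleGraph V) [DecidableRel G.Adj] (f : V → V → ℝ) : ℝ :=
  ⨆ p : V × V, if G.Adj p.1 p.2 then |f p.1 p.2| else 0

/-- `M` is a matching of `G`: a symmetric subrelation of adjacency pairing each node
with at most one partner. -/
structure IsMatching (G : SimpleGraph V) (M : V → V → Prop) : Prop where
  subset : ∀ i j, M i j → G.Adj i j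
  symm : ∀ i j, M i j → M j i
  unique : ∀ i j k, M i j → M i k → j = k

/-- `(M, γ)` is a trade outcome. -/
def IsOutcome (G : SimpleGraph V) (w : V → V → ℝ) (M : V → V → Prop) (γ : V → ℝ) : Prop :=
  IsMatching G M ∧ (∀ i, 0 ≤ γ i) ∧ (∀ i j, M i j → γ i + γ j = w i j) ∧
    ∀ i, (∀ j, ¬M i j) → γ i = 0

/-- Stability of an outcome. -/
def Stable (G : SimpleGraph V) (w : V → V → ℝ) (M : V → V → Prop) (γ : V → ℝ) : Prop :=
  ∀ i j, G.Adj i j → ¬M i j → w i j ≤ γ i + γ j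

/-- The best alternative of `i` excluding `j`: `max_{k ∈ ∂i \ j} (w_{ik} − γ_k)₊`. -/
noncomputable def bestAlt (G : SimpleGraph V) [DecidableRel G.Adj] (w : V → V → ℝ)
    (γ : V → ℝ) (i j : V) : ℝ :=
  fmax ((G.neighborFinset i).erase j) fun k => pos (w i k - γ k)

/-- Balance of an outcome. -/
def Balanced (G : SimpleGraph V) [DecidableRel G.Adj] (w : V → V → ℝ) (M : V → V → Prop)
    (γ : V → ℝ) : Prop :=
  ∀ i j, M i j → γ i - bestAlt G w γ i j = γ j - bestAlt G w γ j i

/-- Nash bargaining solution: a stable and balanced trade outcome. -/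
def IsNBSolution (G : SimpleGraph V) [DecidableRel G.Adj] (w : V → V → ℝ)
    (M : V → V → Prop) (γ : V → ℝ) : Prop :=
  IsOutcome G w M γ ∧ Stable G w M γ ∧ Balanced G w M γ

/-- `ε`-balance. -/
def EpsBalanced (G : SimpleGraph V) [DecidableRel G.Adj] (w : V → V → ℝ)
    (M : V → V → Prop) (γ : V → ℝ) (ε : ℝ) : Prop :=
  ∀ i j, M i j → |(γ i - bestAlt G w γ i j) - (γ j - bestAlt G w γ j i)| ≤ ε

/-- `ε`-Nash bargaining solution. -/
def IsEpsNB (G : SimpleGraph V) [DecidableRel G.Adj] (w : V → V → ℝ)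
    (M : V → V → Prop) (γ : V → ℝ) (ε : ℝ) : Prop :=
  IsOutcome G w M γ ∧ Stable G w M γ ∧ EpsBalanced G w M γ ε

/-- Feasible point of the LP relaxation of maximum weight matching. -/
def LPFeasible (G : SimpleGraph V) [DecidableRel G.Adj] (x : V → V → ℝ) : Prop :=
  (∀ i j, x i j = x j i) ∧ (∀ i j, 0 ≤ x i j) ∧ (∀ i j, ¬G.Adj i j → x i j = 0) ∧
    ∀ i, ∑ j ∈ G.neighborFinset i, x i j ≤ 1

/-- LP objective `Σ_{(i,j)∈E} w_{ij} x_{ij}` (each undirected edge counted once). -/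
noncomputable def LPval (G : SimpleGraph V) [DecidableRel G.Adj] (w x : V → V → ℝ) : ℝ :=
  (1 / 2) * ∑ i, ∑ j ∈ G.neighborFinset i, w i j * x i j

/-- Optimal point of the LP relaxation of maximum weight matching. -/
def LPOptimal (G : SimpleGraph V) [DecidableRel G.Adj] (w x : V → V → ℝ) : Prop :=
  LPFeasible G x ∧ ∀ y, LPFeasible G y → LPval G w y ≤ LPval G w x

def Integral (x : V → V → ℝ) : Prop := ∀ i j, x i j = 0 ∨ x i j = 1

def HalfIntegral (x : V → V → ℝ) : Prop := ∀ i j, x i j = 0 ∨ x i j = 1 / 2 ∨ x i j = 1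

open Classical in
/-- The LP point associated to a matching. -/
noncomputable def mInd (M : V → V → Prop) (i j : V) : ℝ := if M i j then 1 else 0

/-- The state with offers `m` induces the matching `M`: every node receiving a positive
offer is matched and receives its unique best offer from its partner, and every node
with zero earnings is unmatched. -/
def Induces (G : SimpleGraph V) [DecidableRel G.Adj] (m : V → V → ℝ)
    (M : V → V → Prop) : Prop :=
  IsMatching G M ∧
    (∀ i, (∃ k, G.Adj i k ∧ 0 < m k i) →
      ∃ j, M i j ∧ ∀ k, G.Adj i k → k ≠ j → m k i < m j i) ∧
    ∀ i, (fmax (G.neighborFinset i) fun k => m k i) = 0 → ∀ j, ¬M i j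

/-- Feasibility for the dual LP. -/
def DualFeasible (G : SimpleGraph V) (w : V → V → ℝ) (y : V → ℝ) : Prop :=
  (∀ i, 0 ≤ y i) ∧ ∀ i j, G.Adj i j → w i j ≤ y i + y j

/-- Optimality for the dual LP. -/
def DualOptimal (G : SimpleGraph V) (w : V → V → ℝ) (y : V → ℝ) : Prop :=
  DualFeasible G w y ∧ ∀ z, DualFeasible G w z → ∑ i, y i ≤ ∑ i, z i

/-- The unmatched balance property at every edge. -/
def UnmatchedBalance (G : SimpleGraph V) [DecidableRel G.Adj] (w : V → V → ℝ)
    (y : V → ℝ) : Prop :=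
  ∀ i j, G.Adj i j → y i - bestAlt G w y i j = y j - bestAlt G w y j i

/-! ### Unequal division -/

/-- Valid split fractions: `r_{ij} ∈ (0,1)` with `r_{ij} + r_{ji} = 1` on every edge. -/
def GoodR (G : SimpleGraph V) (r : V → V → ℝ) : Prop :=
  ∀ i j, G.Adj i j → 0 < r i j ∧ r i j < 1 ∧ r i j + r j i = 1

/-- The UD offer from `i` to `j`. -/
noncomputable def offerUD (w r α : V → V → ℝ) (i j : V) : ℝ :=
  pos (w i j - α i j) - r i j * pos (w i j - α i j - α j i)

/-- The UD update operator. -/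
noncomputable def updUD (G : SimpleGraph V) [DecidableRel G.Adj] (w r α : V → V → ℝ)
    (i j : V) : ℝ :=
  fmax ((G.neighborFinset i).erase j) fun k => offerUD w r α k i

/-- The UD earnings estimate. -/
noncomputable def earnUD (G : SimpleGraph V) [DecidableRel G.Adj] (w r α : V → V → ℝ)
    (i : V) : ℝ :=
  fmax (G.neighborFinset i) fun k => offerUD w r α k i

/-- Fixed point of the UD update operator. -/
def IsFixedPtUD (G : SimpleGraph V) [DecidableRel G.Adj] (w r α : V → V → ℝ) : Prop :=
  ∀ i j, G.Adj i j → updUD G w r α i j = α i j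

/-- Correct division. -/
def CorrectDiv (G : SimpleGraph V) [DecidableRel G.Adj] (w r : V → V → ℝ)
    (M : V → V → Prop) (γ : V → ℝ) : Prop :=
  ∀ i j, M i j →
    (1 / r i j) * (γ i - bestAlt G w γ i j) = (1 / r j i) * (γ j - bestAlt G w γ j i)

/-- UD solution: a stable trade outcome satisfying correct division. -/
def IsUDSolution (G : SimpleGraph V) [DecidableRel G.Adj] (w r : V → V → ℝ)
    (M : V → V → Prop) (γ : V → ℝ) : Prop :=
  IsOutcome G w M γ ∧ Stable G w M γ ∧ CorrectDiv G w r M γ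

/-- Edge surplus. -/
noncomputable def surp (G : SimpleGraph V) [DecidableRel G.Adj] (w : V → V → ℝ)
    (γ : V → ℝ) (i j : V) : ℝ :=
  w i j - bestAlt G w γ i j - bestAlt G w γ j i

open Classical in
/-- The rebalanced allocation `γ^reb`. -/
noncomputable def reb (G : SimpleGraph V) [DecidableRel G.Adj] (w r : V → V → ℝ)
    (M : V → V → Prop) (γ : V → ℝ) (i : V) : ℝ :=
  if h : ∃ j, M i j then
    bestAlt G w γ i h.choose + r i h.choose * surp G w γ i h.choose
  else 0

/-- The Edge Rebalancing iteration `γ^{t+1} = κ γ^reb(γ^t) + (1−κ) γ^t`. -/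
noncomputable def rebIter (G : SimpleGraph V) [DecidableRel G.Adj] (w r : V → V → ℝ)
    (M : V → V → Prop) (κ : ℝ) (γ0 : V → ℝ) : ℕ → V → ℝ
  | 0 => γ0
  | t + 1 => fun i =>
      κ * reb G w r M (rebIter G w r M κ γ0 t) i + (1 - κ) * rebIter G w r M κ γ0 t i

/-! ### Averaging recursion -/

/-- Iterated averaging. -/
noncomputable def avg (κ : ℝ) (g : ℕ → ℝ) : ℕ → ℕ → ℝ
  | 0, k => g k
  | r + 1, k => (1 - κ) * avg κ g r k + κ * avg κ g r (k + 1)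

theorem avg_one (κ : ℝ) (g : ℕ → ℝ) (hg : ∀ k, g (k + 1) = 1) (r k : ℕ) :
    avg κ g r (k + 1) = 1 := by
  induction r generalizing k with
  | zero => simp [avg, hg]
  | succ r ih => simp only [avg, ih]; ring

theorem avg_step (κ : ℝ) (g g' : ℕ → ℝ)
    (h : ∀ k, g' (k + 1) = (1 - 2 * (κ * (1 - κ))) * g (k + 1) + κ * (1 - κ) * g (k + 2)
      + κ * (1 - κ) * g k) (r k : ℕ) :
    avg κ g' r (k + 1) = (1 - κ) * avg κ g (r + 1) (k + 1) + κ * avg κ g (r + 1) k := by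
  induction r generalizing k with
  | zero => simp only [avg, h]; ring
  | succ r ih =>
    have h1 := ih k
    have h2 := ih (k + 1)
    simp only [avg] at h1 h2 ⊢
    rw [h1, h2]; ring

/-- Kernel functions. -/
noncomputable def ker (k : ℕ) (θ : ℝ) : ℝ :=
  ∑ j ∈ Finset.range k, (Real.cos (j * θ) + Real.cos ((j + 1 : ℕ) * θ))

theorem ker_rec (k : ℕ) (θ : ℝ) :
    ker (k + 2) θ + ker k θ = 2 * Real.cos θ * ker (k + 1) θ := by
  induction k with
  | zero =>
    simp only [ker, Finset.sum_range_succ, Finset.sum_range_zero]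
    push_cast
    rw [Real.cos_two_mul]
    simp
    ring
  | succ k ih =>
    have e1 : ker (k + 1 + 2) θ = ker (k + 2) θ + (Real.cos ((k + 2 : ℕ) * θ) + Real.cos ((k + 3 : ℕ) * θ)) := by
      rw [ker, Finset.sum_range_succ]; rfl
    have e2 : ker (k + 1) θ = ker k θ + (Real.cos ((k : ℕ) * θ) + Real.cos ((k + 1 : ℕ) * θ)) := by
      rw [ker, Finset.sum_range_succ]; rfl
    have e3 : ker (k + 1 + 1) θ = ker (k + 1) θ + (Real.cos ((k + 1 : ℕ) * θ) + Real.cos ((k + 2 : ℕ) * θ)) := by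
      rw [ker, Finset.sum_range_succ]; rfl
    have c : ∀ n : ℕ, Real.cos ((n + 2 : ℕ) * θ) + Real.cos ((n : ℕ) * θ)
        = 2 * Real.cos θ * Real.cos ((n + 1 : ℕ) * θ) := by
      intro n
      rw [show ((n + 2 : ℕ) : ℝ) * θ = (n + 1 : ℕ) * θ + θ by push_cast; ring,
        show ((n : ℕ) : ℝ) * θ = (n + 1 : ℕ) * θ - θ by push_cast; ring,
        Real.cos_add, Real.cos_sub]
      ring
    have c1 := c k
    have c2 := c (k + 1)
    rw [e3, e1]
    have : k + 1 + 2 = k + 3 := rfl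
    simp only [show k + 1 + 2 = k + 3 from rfl, show k + 1 + 1 = k + 2 from rfl] at c2
    linear_combination ih + c1 + c2 + e2

theorem ker_cont (k : ℕ) : Continuous (ker k) := by
  unfold ker; fun_prop

/-- Survival values. -/
noncomputable def surv (q : ℝ) (m k : ℕ) : ℝ :=
  (1 / Real.pi) * ∫ θ in (0 : ℝ)..Real.pi, ker k θ * (1 - 2 * q + 2 * q * Real.cos θ) ^ m

theorem surv_zero (q : ℝ) (m : ℕ) : surv q m 0 = 0 := by
  simp [surv, ker]

theorem surv_init (q : ℝ) (k : ℕ) : surv q 0 (k + 1) = 1 := by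
  have hc : ∀ j : ℕ, ∫ θ in (0 : ℝ)..Real.pi, Real.cos ((j + 1 : ℕ) * θ) = 0 := by
    intro j
    have hj : ((j + 1 : ℕ) : ℝ) ≠ 0 := by positivity
    rw [intervalIntegral.integral_comp_mul_left (fun x => Real.cos x) hj, integral_cos,
      Real.sin_nat_mul_pi]
    simp
  have key : ∀ k : ℕ, ∫ θ in (0 : ℝ)..Real.pi, ker (k + 1) θ = Real.pi := by
    intro k
    induction k with
    | zero =>
      have : ker (0 + 1) = fun θ => 1 + Real.cos ((0 + 1 : ℕ) * θ) := by
        funext θ; simp [ker]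
      rw [this, intervalIntegral.integral_add (by simp)
        (Continuous.intervalIntegrable (by fun_prop) _ _), hc]
      simp
    | succ k ih =>
      have : ker (k + 1 + 1) = fun θ => ker (k + 1) θ +
          (Real.cos ((k + 1 : ℕ) * θ) + Real.cos ((k + 1 + 1 : ℕ) * θ)) := by
        funext θ; rw [ker, Finset.sum_range_succ]; rfl
      rw [this, intervalIntegral.integral_add ((ker_cont _).intervalIntegrable _ _)
        (Continuous.intervalIntegrable (by fun_prop) _ _), ih,
        intervalIntegral.integral_add
        (Continuous.intervalIntegrable (by fun_prop) _ _)
        (Continuous.intervalIntegrable (by fun_prop) _ _), hc, hc]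
      simp
  simp only [surv, pow_zero, mul_one, key]
  field_simp

theorem surv_step (q : ℝ) (m k : ℕ) :
    surv q (m + 1) (k + 1) = (1 - 2 * q) * surv q m (k + 1) + q * surv q m (k + 2)
      + q * surv q m k := by
  have hi : ∀ k, IntervalIntegrable
      (fun θ => ker k θ * (1 - 2 * q + 2 * q * Real.cos θ) ^ m) MeasureTheory.volume 0 Real.pi := by
    intro k
    have := ker_cont k
    exact Continuous.intervalIntegrable (by fun_prop) _ _
  have : (fun θ => ker (k + 1) θ * (1 - 2 * q + 2 * q * Real.cos θ) ^ (m + 1)) = fun θ =>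
      (1 - 2 * q) * (ker (k + 1) θ * (1 - 2 * q + 2 * q * Real.cos θ) ^ m)
      + q * (ker (k + 2) θ * (1 - 2 * q + 2 * q * Real.cos θ) ^ m)
      + q * (ker k θ * (1 - 2 * q + 2 * q * Real.cos θ) ^ m) := by
    funext θ
    have h := ker_rec k θ
    rw [pow_succ]
    linear_combination (-q * (1 - 2 * q + 2 * q * Real.cos θ) ^ m) * h
  unfold surv
  rw [this, intervalIntegral.integral_add (((hi _).const_mul _).add ((hi _).const_mul _))
    ((hi _).const_mul _), intervalIntegral.integral_add ((hi _).const_mul _) ((hi _).const_mul _)]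
  simp only [intervalIntegral.integral_const_mul]
  ring

theorem gauss_bound (b : ℝ) (hb : 0 < b) :
    ∫ s in (0 : ℝ)..1, Real.exp (-b * s ^ 2) ≤ √(Real.pi / b) / 2 := by
  rw [← integral_gaussian_Ioi b, intervalIntegral.integral_of_le zero_le_one]
  apply MeasureTheory.setIntegral_mono_set
  · exact (integrable_exp_neg_mul_sq hb).integrableOn
  · exact Filter.Eventually.of_forall fun x => (Real.exp_pos _).le
  · exact (Set.Ioc_subset_Ioi_self).eventuallyLE

theorem surv_bound (q : ℝ) (hq : 0 < q) (hq4 : 4 * q ≤ 1) (n : ℕ) (hn : 0 < n) :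
    surv q n 1 ≤ 1 / √(Real.pi * q * n) := by
  have hn' : (0 : ℝ) < n := by exact_mod_cast hn
  have hb : 0 < 4 * q * n := by positivity
  have hpi := Real.pi_pos
  have step1 : ∫ θ in (0 : ℝ)..Real.pi, ker 1 θ * (1 - 2 * q + 2 * q * Real.cos θ) ^ n
      ≤ ∫ θ in (0 : ℝ)..Real.pi,
        4 * (Real.exp (-(4 * q * n) * Real.sin (θ / 2) ^ 2) * (Real.cos (θ / 2) * (1 / 2))) := by
    apply intervalIntegral.integral_mono_on hpi.le
    · have := ker_cont 1
      exact Continuous.intervalIntegrable (by fun_prop) _ _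
    · exact Continuous.intervalIntegrable (by fun_prop) _ _
    · intro θ hθ
      have hc0 : 0 ≤ Real.cos (θ / 2) :=
        Real.cos_nonneg_of_mem_Icc ⟨by linarith [hθ.1], by linarith [hθ.2]⟩
      have hc1 := Real.cos_le_one (θ / 2)
      have hcos : Real.cos θ = 2 * Real.cos (θ / 2) ^ 2 - 1 := by
        rw [← Real.cos_two_mul]; congr 1; ring
      have hss := Real.sin_sq_add_cos_sq (θ / 2)
      have hk : ker 1 θ = 2 * Real.cos (θ / 2) ^ 2 := by
        simp [ker, hcos]
      have hl : 1 - 2 * q + 2 * q * Real.cos θ = 1 - 4 * q * Real.sin (θ / 2) ^ 2 := by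
        rw [hcos]; linear_combination (4 * q) * hss
      have hs1 : Real.sin (θ / 2) ^ 2 ≤ 1 := Real.sin_sq_le_one _
      have hl0 : 0 ≤ 1 - 4 * q * Real.sin (θ / 2) ^ 2 := by nlinarith
      have he : (1 - 4 * q * Real.sin (θ / 2) ^ 2) ^ n
          ≤ Real.exp (-(4 * q * n) * Real.sin (θ / 2) ^ 2) := by
        have := Real.add_one_le_exp (-(4 * q * Real.sin (θ / 2) ^ 2))
        calc (1 - 4 * q * Real.sin (θ / 2) ^ 2) ^ n
            ≤ (Real.exp (-(4 * q * Real.sin (θ / 2) ^ 2))) ^ n := by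
              apply pow_le_pow_left₀ hl0; linarith
          _ = _ := by rw [← Real.exp_nat_mul]; congr 1; ring
      rw [hk, hl]
      calc 2 * Real.cos (θ / 2) ^ 2 * (1 - 4 * q * Real.sin (θ / 2) ^ 2) ^ n
          ≤ (2 * Real.cos (θ / 2)) * Real.exp (-(4 * q * n) * Real.sin (θ / 2) ^ 2) := by
            apply mul_le_mul _ he (by positivity) (by positivity)
            nlinarith
        _ = _ := by ring
  have step2 : ∫ θ in (0 : ℝ)..Real.pi,
        (Real.exp (-(4 * q * n) * Real.sin (θ / 2) ^ 2) * (Real.cos (θ / 2) * (1 / 2)))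
      = ∫ s in (0 : ℝ)..1, Real.exp (-(4 * q * n) * s ^ 2) := by
    have := intervalIntegral.integral_comp_mul_deriv (a := 0) (b := Real.pi)
      (f := fun θ => Real.sin (θ / 2)) (f' := fun θ => Real.cos (θ / 2) * (1 / 2))
      (g := fun s => Real.exp (-(4 * q * n) * s ^ 2))
      (fun x _ => ((hasDerivAt_id x).div_const 2).sin)
      (Continuous.continuousOn (by fun_prop)) (by fun_prop)
    simpa using this
  rw [intervalIntegral.integral_const_mul, step2] at step1
  have step3 := gauss_bound (4 * q * n) hb
  have hsq : √(Real.pi / (4 * q * n)) / 2 * 4 = Real.pi * (1 / √(Real.pi * q * n)) := by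
    have h1 : Real.pi / (4 * q * n) = (Real.pi / 2) ^ 2 / (Real.pi * q * n) := by
      field_simp; norm_num
    rw [h1, Real.sqrt_div (by positivity), Real.sqrt_sq (by positivity)]
    ring
  have : (∫ θ in (0 : ℝ)..Real.pi, ker 1 θ * (1 - 2 * q + 2 * q * Real.cos θ) ^ n)
      ≤ Real.pi * (1 / √(Real.pi * q * n)) := by linarith
  unfold surv
  rw [one_div_mul_eq_div, div_le_iff₀ hpi]
  linarith

/-! ### The operator -/

theorem fmax_le' {V : Type*} (s : Finset V) (f : V → ℝ) (c : ℝ) (hc : 0 ≤ c)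
    (h : ∀ k ∈ s, f k ≤ c) : fmax s f ≤ c :=
  Real.iSup_le (fun k => Real.iSup_le (fun hk => h k hk) hc) hc

theorem fmax_nonneg' {V : Type*} (s : Finset V) (f : V → ℝ)
    (h : ∀ k ∈ s, 0 ≤ f k) : 0 ≤ fmax s f :=
  Real.iSup_nonneg fun k => Real.iSup_nonneg fun hk => h k hk

theorem le_fmax' {V : Type*} [Fintype V] (s : Finset V) (f : V → ℝ) (k : V) (hk : k ∈ s) :
    f k ≤ fmax s f := by
  have h := le_ciSup (f := fun k => ⨆ _ : k ∈ s, f k) (Set.finite_range _).bddAbove k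
  simpa [fmax, hk] using h

theorem fmax_lip {V : Type*} [Fintype V] (s : Finset V) (f g : V → ℝ) (c : ℝ) (hc : 0 ≤ c)
    (hf : ∀ k ∈ s, 0 ≤ f k) (hg : ∀ k ∈ s, 0 ≤ g k)
    (h : ∀ k ∈ s, |f k - g k| ≤ c) : |fmax s f - fmax s g| ≤ c := by
  have h1 : fmax s f ≤ fmax s g + c :=
    fmax_le' s f _ (add_nonneg (fmax_nonneg' s g hg) hc) fun k hk => by
      linarith [le_fmax' s g k hk, (abs_le.1 (h k hk)).2]
  have h2 : fmax s g ≤ fmax s f + c :=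
    fmax_le' s g _ (add_nonneg (fmax_nonneg' s f hf) hc) fun k hk => by
      linarith [le_fmax' s f k hk, (abs_le.1 (h k hk)).1]
  rw [abs_le]; constructor <;> linarith

theorem off_nonneg (x y : ℝ) (hy : 0 ≤ y) : 0 ≤ pos x - 1 / 2 * pos (x - y) := by
  unfold pos
  rcases max_cases x 0 with ⟨h1, _⟩ | ⟨h1, _⟩ <;>
  rcases max_cases (x - y) 0 with ⟨h2, _⟩ | ⟨h2, _⟩ <;> rw [h1, h2] <;> linarith

theorem off_le (x y : ℝ) (hx : x ≤ 1) : pos x - 1 / 2 * pos (x - y) ≤ 1 := by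
  unfold pos
  rcases max_cases x 0 with ⟨h1, _⟩ | ⟨h1, _⟩ <;>
  rcases max_cases (x - y) 0 with ⟨h2, _⟩ | ⟨h2, _⟩ <;> rw [h1, h2] <;> linarith

theorem off_lip (x y x' y' c : ℝ) (hy : 0 ≤ y) (hy' : 0 ≤ y') (hx : |x - x'| ≤ c)
    (hyy : |y - y'| ≤ c) :
    |(pos x - 1 / 2 * pos (x - y)) - (pos x' - 1 / 2 * pos (x' - y'))| ≤ c := by
  unfold pos
  rw [abs_le] at *
  rcases max_cases x 0 with ⟨h1, _⟩ | ⟨h1, _⟩ <;>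
  rcases max_cases (x - y) 0 with ⟨h2, _⟩ | ⟨h2, _⟩ <;>
  rcases max_cases x' 0 with ⟨h3, _⟩ | ⟨h3, _⟩ <;>
  rcases max_cases (x' - y') 0 with ⟨h4, _⟩ | ⟨h4, _⟩ <;>
  rw [h1, h2, h3, h4] <;> constructor <;> linarith

section op
variable {V : Type*} [Fintype V] [DecidableEq V] (G : SimpleGraph V) [DecidableRel G.Adj]
  (w : V → V → ℝ)

theorem offer_nonneg' (α : V → V → ℝ) (hα : ∀ i j, G.Adj i j → α i j ∈ Set.Icc (0 : ℝ) 1)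
    (i j : V) (h : G.Adj i j) : 0 ≤ offer w α i j :=
  off_nonneg _ _ (hα j i h.symm).1

theorem upd_mem (hw1 : ∀ i j, G.Adj i j → w i j ≤ 1) (α : V → V → ℝ)
    (hα : ∀ i j, G.Adj i j → α i j ∈ Set.Icc (0 : ℝ) 1) (i j : V) :
    upd G w α i j ∈ Set.Icc (0 : ℝ) 1 := by
  have adj : ∀ k ∈ (G.neighborFinset i).erase j, G.Adj k i := fun k hk =>
    ((G.mem_neighborFinset i k).1 (Finset.mem_of_mem_erase hk)).symm
  constructor
  · exact fmax_nonneg' _ _ fun k hk => offer_nonneg' G w α hα k i (adj k hk)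
  · exact fmax_le' _ _ _ zero_le_one fun k hk => off_le _ _ (by
      linarith [hw1 k i (adj k hk), (hα k i (adj k hk)).1])

theorem upd_lip (α β : V → V → ℝ)
    (hα : ∀ i j, G.Adj i j → α i j ∈ Set.Icc (0 : ℝ) 1)
    (hβ : ∀ i j, G.Adj i j → β i j ∈ Set.Icc (0 : ℝ) 1) (c : ℝ)
    (h : ∀ i j, G.Adj i j → |α i j - β i j| ≤ c) (i j : V) (hij : G.Adj i j) :
    |upd G w α i j - upd G w β i j| ≤ c := by
  have adj : ∀ k ∈ (G.neighborFinset i).erase j, G.Adj k i := fun k hk =>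
    ((G.mem_neighborFinset i k).1 (Finset.mem_of_mem_erase hk)).symm
  refine fmax_lip _ _ _ c ((abs_nonneg _).trans (h i j hij))
    (fun k hk => offer_nonneg' G w α hα k i (adj k hk))
    (fun k hk => offer_nonneg' G w β hβ k i (adj k hk)) fun k hk => ?_
  refine off_lip _ _ _ _ c (hα i k (adj k hk).symm).1 (hβ i k (adj k hk).symm).1 ?_
    (h i k (adj k hk).symm)
  rw [show w k i - α k i - (w k i - β k i) = -(α k i - β k i) by ring, abs_neg]
  exact h k i (adj k hk)

theorem dyn_mem (hw1 : ∀ i j, G.Adj i j → w i j ≤ 1) (κ : ℝ) (hκ : κ ∈ Set.Ioo (0 : ℝ) 1)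
    (α0 : V → V → ℝ) (hα0 : ∀ i j, G.Adj i j → α0 i j ∈ Set.Icc (0 : ℝ) 1) (t : ℕ) :
    ∀ i j, G.Adj i j → dyn G w κ α0 t i j ∈ Set.Icc (0 : ℝ) 1 := by
  induction t with
  | zero => exact hα0
  | succ t ih =>
    intro i j hij
    obtain ⟨a0, a1⟩ := ih i j hij
    obtain ⟨b0, b1⟩ := upd_mem G w hw1 _ ih i j
    obtain ⟨k0, k1⟩ := hκ
    simp only [dyn, Set.mem_Icc]
    constructor <;> nlinarith

theorem abs_conv (κ a b z A B : ℝ) (h0 : 0 < κ) (h1 : κ < 1) (ha : |a - z| ≤ A)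
    (hb : |b - z| ≤ B) : |(1 - κ) * a + κ * b - z| ≤ (1 - κ) * A + κ * B := by
  rw [abs_le] at *
  constructor <;> nlinarith

theorem dyn_bound (hw1 : ∀ i j, G.Adj i j → w i j ≤ 1) (κ : ℝ) (hκ : κ ∈ Set.Ioo (0 : ℝ) 1)
    (α0 : V → V → ℝ) (hα0 : ∀ i j, G.Adj i j → α0 i j ∈ Set.Icc (0 : ℝ) 1) (m : ℕ) :
    ∀ r : ℕ, (∀ i j, G.Adj i j → |dyn G w κ α0 m i j - dyn G w κ α0 (m + r) i j|
        ≤ avg κ (surv (κ * (1 - κ)) m) r 0) ∧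
      ∀ i j, G.Adj i j → |dyn G w κ α0 m i j - upd G w (dyn G w κ α0 (m + r)) i j|
        ≤ avg κ (surv (κ * (1 - κ)) m) r 1 := by
  have hmem := dyn_mem G w hw1 κ hκ α0 hα0
  have main : ∀ m, (∀ r : ℕ, ∀ i j, G.Adj i j →
      |dyn G w κ α0 m i j - upd G w (dyn G w κ α0 (m + r)) i j|
        ≤ avg κ (surv (κ * (1 - κ)) m) r 1) →
      ∀ r : ℕ, (∀ i j, G.Adj i j → |dyn G w κ α0 m i j - dyn G w κ α0 (m + r) i j|
        ≤ avg κ (surv (κ * (1 - κ)) m) r 0) := by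
    intro m hE r
    induction r with
    | zero => intro i j _; simp [avg, surv_zero]
    | succ r ih =>
      intro i j hij
      have := abs_conv κ _ _ _ _ _ hκ.1 hκ.2 ((abs_sub_comm _ _).trans_le (ih i j hij))
        ((abs_sub_comm _ _).trans_le (hE r i j hij))
      rw [abs_sub_comm]
      exact this
  induction m with
  | zero =>
    have hE : ∀ r : ℕ, ∀ i j, G.Adj i j →
      |dyn G w κ α0 0 i j - upd G w (dyn G w κ α0 (0 + r)) i j|
        ≤ avg κ (surv (κ * (1 - κ)) 0) r 1 := by
      intro r i j hij
      rw [avg_one κ _ (surv_init _) r 0]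
      have h1 := hmem 0 i j hij
      have h2 := upd_mem G w hw1 _ (hmem (0 + r)) i j
      rw [abs_le]; constructor <;> linarith [h1.1, h1.2, h2.1, h2.2]
    exact fun r => ⟨main 0 hE r, hE r⟩
  | succ m ih =>
    have hE : ∀ r : ℕ, ∀ i j, G.Adj i j →
      |dyn G w κ α0 (m + 1) i j - upd G w (dyn G w κ α0 (m + 1 + r)) i j|
        ≤ avg κ (surv (κ * (1 - κ)) (m + 1)) r 1 := by
      intro r i j hij
      rw [avg_step κ _ _ (surv_step _ m) r 0, show m + 1 + r = m + (r + 1) by ring]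
      exact abs_conv κ _ _ _ _ _ hκ.1 hκ.2 ((ih (r + 1)).2 i j hij)
        (upd_lip G w _ _ (hmem m) (hmem _) _ (ih (r + 1)).1 i j hij)
    exact fun r => ⟨main (m + 1) hE r, hE r⟩

end op

/-- For weights in `[0,1]`, any initial condition in `[0,1]^{2|E|}` and
any `ε > 0`, after `T*(ε) = 1/(π κ (1−κ) ε²)` steps every iterate of the natural
dynamics is an `ε`-fixed point. -/
theorem eps_fixedPt_after_Tstar
    {V : Type*} [Fintype V] [DecidableEq V] (G : SimpleGraph V) [DecidableRel G.Adj]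
    (w : V → V → ℝ) (hw : GoodW G w) (hw1 : ∀ i j, G.Adj i j → w i j ≤ 1)
    (κ : ℝ) (hκ : κ ∈ Set.Ioo (0 : ℝ) 1)
    (α0 : V → V → ℝ) (hα0 : ∀ i j, G.Adj i j → α0 i j ∈ Set.Icc (0 : ℝ) 1)
    (ε : ℝ) (hε : 0 < ε) :
    ∀ t : ℕ, 1 / (Real.pi * κ * (1 - κ) * ε ^ 2) ≤ t →
      IsEpsFixedPt G w (dyn G w κ α0 t) ε := by
  intro t ht i j hij
  obtain ⟨k0, k1⟩ := hκ
  have hpi := Real.pi_pos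
  have hq : 0 < κ * (1 - κ) := mul_pos k0 (by linarith)
  have hden : 0 < Real.pi * κ * (1 - κ) * ε ^ 2 := by
    have : 0 < 1 - κ := by linarith
    positivity
  have ht0 : (0 : ℝ) < t := lt_of_lt_of_le (by positivity) ht
  have h := (dyn_bound G w hw1 κ ⟨k0, k1⟩ α0 hα0 t 0).2 i j hij
  refine h.trans ?_
  refine (surv_bound (κ * (1 - κ)) hq (by nlinarith [sq_nonneg (2 * κ - 1)]) t
    (by exact_mod_cast ht0)).trans ?_
  rw [div_le_iff₀ hden] at ht
  have hp : 0 < Real.pi * (κ * (1 - κ)) * t := by positivity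
  rw [div_le_iff₀ (Real.sqrt_pos.2 hp), ← Real.sqrt_sq hε.le, ← Real.sqrt_mul (by positivity),
    Real.one_le_sqrt]
  linarith
end EN
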